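/- arXiv:2407.17237 — 5 statements merged into one kernel-verified Lean document; each statement's English description precedes it below -/
import Mathlib

section
/- Let U be a finite index set. For each u ∈ U let W_u be an N×N complex positive semidefinite Hermitian matrix and h_u ∈ ℂ^N a vector with h_u^H W_u h_u > 0, and let R_d be an N×N positive semidefinite Hermitian matrix. Define ξ_u = (h_u^H W_u h_u)^{−1/2} · (W_u h_u), W̄_u = ξ_u ξ_u^H, and R̄_d = Σ_{u∈U} W_u + R_d − Σ_{u∈U} W̄_u. Then: (i) each W̄_u is positive semidefinite of rank exactly 1; (ii) h_u^H W̄_u h_u = h_u^H W_u h_u for every u ∈ U; (iii) R̄_d is positive semidefinite; (iv) Σ_{u∈U} W̄_u + R̄_d = Σ_{u∈U} W_u + R_d. Consequently, for any σ² > 0 the SINR values γ_u = (h_u^H W_u h_u) / (Σ_{k≠u} h_u^H W_k h_u + h_u^H R_d h_u + σ²) are unchanged when (W_u, R_d) is replaced by (W̄_u, R̄_d). -/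
open Matrix
open scoped ComplexOrder

/-!
Each `Wb u` is the matrix `W x (W x)ᴴ / (xᴴ W x)`, with `W = W u` and `x = h u`, which Wedderburn
rank reduction subtracts from `W`. It acts on `x` as `W` does, so the signal power `xᴴ W x` is kept,
and the remainder is the congruence `Pᴴ W P` with `P = 1 - x (W x)ᴴ / (xᴴ W x)`, hence positive
semidefinite. For a given noise power, the SINR of user `u` depends only on its signal power and on
the total covariance, and both are preserved.
-/

section Hermitian

variable {n R : Type*} [Fintype n] [NonUnitalSemiring R] [StarRing R] {A : Matrix n n R}

theorem star_mulVec_of_isHermitian (hA : A.IsHermitian) (x : n → R) :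
    star (A *ᵥ x) = star x ᵥ* A := by
  rw [star_mulVec, hA.eq]

theorem isSelfAdjoint_star_dotProduct_mulVec (hA : A.IsHermitian) (x : n → R) :
    IsSelfAdjoint (star x ⬝ᵥ A *ᵥ x) := by
  rw [IsSelfAdjoint, ← star_dotProduct, star_mulVec_of_isHermitian hA, dotProduct_mulVec]

end Hermitian

theorem rank_vecMulVec_eq_one {m n R : Type*} [Fintype n] [CommRing R] [IsDomain R]
    {w : m → R} {v : n → R} (hw : w ≠ 0) (hv : v ≠ 0) : (vecMulVec w v).rank = 1 := by
  classical
  refine le_antisymm (rank_vecMulVec_le w v) (Nat.one_le_iff_ne_zero.2 fun hrank => ?_)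
  have hzero : (vecMulVec w v).mulVecLin = 0 :=
    LinearMap.range_eq_bot.1 (Submodule.finrank_eq_zero.1 hrank)
  obtain ⟨i, hi⟩ := Function.ne_iff.1 hw
  obtain ⟨j, hj⟩ := Function.ne_iff.1 hv
  have hij : w i * v j = 0 := by
    simpa [vecMulVec_apply] using congrFun (LinearMap.congr_fun hzero (Pi.single j 1)) i
  exact mul_ne_zero hi hj hij

section RankOneCompression

variable {n K : Type*} [Fintype n] [Field K] [StarRing K] {A : Matrix n n K} {x : n → K}

/-- The rank-one compression `A x (A x)ᴴ / (xᴴ A x)` of `A` along `x`, i.e. the term subtracted from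
a Hermitian `A` in Wedderburn rank reduction. It is `0` when `xᴴ A x = 0`, since `0⁻¹ = 0`. -/
def rankOneCompression (A : Matrix n n K) (x : n → K) : Matrix n n K :=
  (star x ⬝ᵥ A *ᵥ x)⁻¹ • vecMulVec (A *ᵥ x) (star (A *ᵥ x))

theorem isHermitian_rankOneCompression (hA : A.IsHermitian) (x : n → K) :
    (rankOneCompression A x).IsHermitian := by
  rw [IsHermitian, rankOneCompression, conjTranspose_smul, conjTranspose_vecMulVec, star_star,
    star_inv₀, (isSelfAdjoint_star_dotProduct_mulVec hA x).star_eq]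

theorem rankOneCompression_mulVec_self (hA : A.IsHermitian) (hx : star x ⬝ᵥ A *ᵥ x ≠ 0) :
    rankOneCompression A x *ᵥ x = A *ᵥ x := by
  rw [rankOneCompression, smul_mulVec, vecMulVec_mulVec, star_mulVec_of_isHermitian hA,
    ← dotProduct_mulVec, op_smul_eq_smul, inv_smul_smul₀ hx]

theorem rank_rankOneCompression (hx : star x ⬝ᵥ A *ᵥ x ≠ 0) :
    (rankOneCompression A x).rank = 1 := by
  have hAx : A *ᵥ x ≠ 0 := fun h0 => hx (by rw [h0, dotProduct_zero])
  rw [rankOneCompression, ← smul_vecMulVec]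
  exact rank_vecMulVec_eq_one (smul_ne_zero (inv_ne_zero hx) hAx) (star_ne_zero.2 hAx)

theorem sub_rankOneCompression_eq_conjTranspose_mul_mul [DecidableEq n] (hA : A.IsHermitian)
    (hx : star x ⬝ᵥ A *ᵥ x ≠ 0) :
    A - rankOneCompression A x =
      (1 - (star x ⬝ᵥ A *ᵥ x)⁻¹ • vecMulVec x (star (A *ᵥ x)))ᴴ * A *
        (1 - (star x ⬝ᵥ A *ᵥ x)⁻¹ • vecMulVec x (star (A *ᵥ x))) := by
  set P : Matrix n n K := 1 - (star x ⬝ᵥ A *ᵥ x)⁻¹ • vecMulVec x (star (A *ᵥ x)) with hP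
  have hAP : A * P = A - rankOneCompression A x := by
    rw [hP, mul_sub, mul_one, mul_smul_comm, mul_vecMulVec, rankOneCompression]
  have hherm : (A - rankOneCompression A x)ᴴ = A - rankOneCompression A x :=
    (hA.sub (isHermitian_rankOneCompression hA x)).eq
  have hmulVec : (A - rankOneCompression A x) *ᵥ x = 0 := by
    rw [sub_mulVec, rankOneCompression_mulVec_self hA hx, sub_self]
  calc A - rankOneCompression A x
      = (A - rankOneCompression A x) * P := by
        rw [hP, mul_sub, mul_one, mul_smul_comm, mul_vecMulVec, hmulVec, zero_vecMulVec, smul_zero,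
          sub_zero]
    _ = Pᴴ * A * P := by rw [← hherm, ← hAP, conjTranspose_mul, hA.eq]

theorem posSemidef_sub_rankOneCompression [PartialOrder K] (hA : A.PosSemidef) (x : n → K) :
    (A - rankOneCompression A x).PosSemidef := by
  classical
  by_cases hx : star x ⬝ᵥ A *ᵥ x = 0
  · rwa [rankOneCompression, hx, _root_.inv_zero, zero_smul, sub_zero]
  · rw [sub_rankOneCompression_eq_conjTranspose_mul_mul hA.isHermitian hx]
    exact hA.conjTranspose_mul_mul_same _

theorem vecMulVec_inv_sqrt_smul_mulVec {n 𝕜 : Type*} [Fintype n] [RCLike 𝕜] {A : Matrix n n 𝕜}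
    (hA : A.PosSemidef) (x : n → 𝕜) :
    vecMulVec ((√(RCLike.re (star x ⬝ᵥ A *ᵥ x)))⁻¹ • A *ᵥ x)
        (star ((√(RCLike.re (star x ⬝ᵥ A *ᵥ x)))⁻¹ • A *ᵥ x)) =
      rankOneCompression A x := by
  obtain ⟨q, hq, hqx⟩ := RCLike.nonneg_iff_exists_ofReal.1 (hA.dotProduct_mulVec_nonneg x)
  rw [rankOneCompression, ← hqx, RCLike.ofReal_re, star_smul, star_trivial, smul_vecMulVec,
    vecMulVec_smul, smul_smul, ← mul_inv, Real.mul_self_sqrt hq, ← RCLike.ofReal_inv,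
    RCLike.real_smul_eq_coe_smul (K := 𝕜)]

end RankOneCompression

section Sinr

variable {n ι K : Type*} [Fintype n] [Fintype ι] [DecidableEq ι]

/-- The signal-to-interference-plus-noise ratio of user `u` with channel vector `x`, beamforming
covariances `W`, residual transmit covariance `R` and noise power `σ2`. It is an element of the
field of coefficients: no real part is taken. -/
def sinr [DivisionRing K] [Star K] (W : ι → Matrix n n K) (R : Matrix n n K) (x : n → K)
    (σ2 : K) (u : ι) : K :=
  (star x ⬝ᵥ W u *ᵥ x) /
    ((∑ k ∈ Finset.univ.erase u, star x ⬝ᵥ W k *ᵥ x) + star x ⬝ᵥ R *ᵥ x + σ2)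

theorem dotProduct_sum_add_mulVec {m : Type*} [Fintype m] [NonUnitalNonAssocSemiring K]
    (W : ι → Matrix m n K) (R : Matrix m n K) (y : m → K) (x : n → K) (u : ι) :
    y ⬝ᵥ ((∑ k, W k) + R) *ᵥ x =
      y ⬝ᵥ W u *ᵥ x + ((∑ k ∈ Finset.univ.erase u, y ⬝ᵥ W k *ᵥ x) + y ⬝ᵥ R *ᵥ x) := by
  rw [add_mulVec, sum_mulVec, dotProduct_add, dotProduct_sum,
    ← Finset.add_sum_erase _ _ (Finset.mem_univ u), add_assoc]

theorem sinr_congr [DivisionRing K] [Star K] {W W' : ι → Matrix n n K} {R R' : Matrix n n K}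
    {x : n → K} {u : ι}
    (hsignal : star x ⬝ᵥ W' u *ᵥ x = star x ⬝ᵥ W u *ᵥ x)
    (htotal : (∑ k, W' k) + R' = (∑ k, W k) + R) (σ2 : K) :
    sinr W' R' x σ2 u = sinr W R x σ2 u := by
  have hinterference :
      (∑ k ∈ Finset.univ.erase u, star x ⬝ᵥ W' k *ᵥ x) + star x ⬝ᵥ R' *ᵥ x =
        (∑ k ∈ Finset.univ.erase u, star x ⬝ᵥ W k *ᵥ x) + star x ⬝ᵥ R *ᵥ x := by
    apply add_left_cancel (a := star x ⬝ᵥ W u *ᵥ x)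
    rw [← dotProduct_sum_add_mulVec W R, ← htotal, dotProduct_sum_add_mulVec W' R' _ x u, hsignal]
  rw [sinr, sinr, hsignal, hinterference]

end Sinr

theorem stmt2_general {n ι 𝕜 : Type*} [Fintype n] [Fintype ι] [DecidableEq ι] [RCLike 𝕜]
    (W : ι → Matrix n n 𝕜) (h : ι → n → 𝕜) (Rd : Matrix n n 𝕜)
    (hW : ∀ u, (W u).PosSemidef) (hRd : Rd.PosSemidef)
    (hpos : ∀ u, 0 < RCLike.re (star (h u) ⬝ᵥ W u *ᵥ h u))
    (ξ : ι → n → 𝕜) (Wb : ι → Matrix n n 𝕜) (Rb : Matrix n n 𝕜)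
    (hξ : ∀ u, ξ u = (√(RCLike.re (star (h u) ⬝ᵥ W u *ᵥ h u)))⁻¹ • W u *ᵥ h u)
    (hWb : ∀ u, Wb u = vecMulVec (ξ u) (star (ξ u)))
    (hRb : Rb = (∑ u, W u) + Rd - ∑ u, Wb u) :
    (∀ u, (Wb u).PosSemidef ∧ (Wb u).rank = 1) ∧
    (∀ u, star (h u) ⬝ᵥ Wb u *ᵥ h u = star (h u) ⬝ᵥ W u *ᵥ h u) ∧
    Rb.PosSemidef ∧
    (∑ u, Wb u) + Rb = (∑ u, W u) + Rd ∧
    ∀ σ2 : ℝ, 0 < σ2 → ∀ u, sinr Wb Rb (h u) (σ2 : 𝕜) u = sinr W Rd (h u) (σ2 : 𝕜) u := by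
  have hne : ∀ u, star (h u) ⬝ᵥ W u *ᵥ h u ≠ 0 := fun u h0 => (hpos u).ne' (by rw [h0, map_zero])
  have hcomp : ∀ u, Wb u = rankOneCompression (W u) (h u) := fun u => by
    rw [hWb, hξ, vecMulVec_inv_sqrt_smul_mulVec (hW u)]
  have hsignal : ∀ u, star (h u) ⬝ᵥ Wb u *ᵥ h u = star (h u) ⬝ᵥ W u *ᵥ h u := fun u => by
    rw [hcomp, rankOneCompression_mulVec_self (hW u).isHermitian (hne u)]
  have htotal : (∑ u, Wb u) + Rb = (∑ u, W u) + Rd := by rw [hRb, add_sub_cancel]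
  have hRb' : Rb = ∑ u, (W u - rankOneCompression (W u) (h u)) + Rd := by
    simp only [hRb, hcomp, Finset.sum_sub_distrib, sub_add_eq_add_sub]
  refine ⟨fun u => ⟨?_, ?_⟩, hsignal, ?_, htotal, fun σ2 _ u => sinr_congr (hsignal u) htotal σ2⟩
  · exact hWb u ▸ posSemidef_vecMulVec_self_star (ξ u)
  · exact hcomp u ▸ rank_rankOneCompression (hne u)
  · rw [hRb']
    exact (posSemidef_sum _ fun u _ => posSemidef_sub_rankOneCompression (hW u) (h u)).add hRd

/-- Proposition 3: rank-one reconstruction preserving quadratic forms, total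
covariance, positive semidefiniteness and hence all SINR values. -/
theorem stmt2 {N : ℕ} {ι : Type} [Fintype ι] [DecidableEq ι]
    (W : ι → Matrix (Fin N) (Fin N) ℂ) (h : ι → Fin N → ℂ)
    (Rd : Matrix (Fin N) (Fin N) ℂ)
    (hW : ∀ u, (W u).PosSemidef) (hRd : Rd.PosSemidef)
    (hpos : ∀ u, 0 < (star (h u) ⬝ᵥ ((W u) *ᵥ (h u))).re)
    (ξ : ι → Fin N → ℂ) (Wb : ι → Matrix (Fin N) (Fin N) ℂ)
    (Rb : Matrix (Fin N) (Fin N) ℂ)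
    (hξ : ∀ u, ξ u =
      ((Real.sqrt ((star (h u) ⬝ᵥ ((W u) *ᵥ (h u))).re))⁻¹ : ℝ) • ((W u) *ᵥ (h u)))
    (hWb : ∀ u, Wb u = Matrix.vecMulVec (ξ u) (star (ξ u)))
    (hRb : Rb = (∑ u, W u) + Rd - ∑ u, Wb u) :
    (∀ u, (Wb u).PosSemidef ∧ (Wb u).rank = 1) ∧
    (∀ u, star (h u) ⬝ᵥ ((Wb u) *ᵥ (h u)) = star (h u) ⬝ᵥ ((W u) *ᵥ (h u))) ∧
    Rb.PosSemidef ∧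
    ((∑ u, Wb u) + Rb = (∑ u, W u) + Rd) ∧
    (∀ σ2 : ℝ, 0 < σ2 → ∀ u,
      (star (h u) ⬝ᵥ ((Wb u) *ᵥ (h u))) /
        ((∑ k ∈ Finset.univ.erase u, star (h u) ⬝ᵥ ((Wb k) *ᵥ (h u)))
          + star (h u) ⬝ᵥ (Rb *ᵥ (h u)) + (σ2 : ℂ))
      = (star (h u) ⬝ᵥ ((W u) *ᵥ (h u))) /
        ((∑ k ∈ Finset.univ.erase u, star (h u) ⬝ᵥ ((W k) *ᵥ (h u)))
          + star (h u) ⬝ᵥ (Rd *ᵥ (h u)) + (σ2 : ℂ))) := by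
  exact stmt2_general W h Rd hW hRd hpos ξ Wb Rb hξ hWb hRb
end

section
/- Let D be a 3×3 real symmetric positive semidefinite matrix with entries D_{ij} (1-indexed). Then 2 D_{12} D_{13} D_{23} ≤ D_{22} D_{13}² + D_{33} D_{12}². -/
open Matrix

lemma posSemidef_quadForm_pair_nonneg {n R : Type*} [Ring R] [PartialOrder R] [StarRing R]
    {M : Matrix n n R} (hM : M.PosSemidef) (j k : n) (x y : R) :
    0 ≤ star x * M j j * x + star x * M j k * y + star y * M k j * x + star y * M k k * y := by
  have h := (hM.submatrix ![j, k]).dotProduct_mulVec_nonneg ![x, y]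
  simpa [dotProduct, mulVec, Fin.sum_univ_two, mul_add, mul_assoc, add_assoc] using h

theorem stmt6_general {n R : Type*} [CommRing R] [PartialOrder R] [IsOrderedAddMonoid R]
    [StarRing R] {D : Matrix n n R} (hD : D.PosSemidef) (i j k : n) :
    D i j * D j k * D k i + D i k * D k j * D j i ≤
      D j j * (D i k * D k i) + D k k * (D i j * D j i) := by
  have hik : star (D i k) = D k i := hD.isHermitian.apply k i
  have hij : star (D i j) = D j i := hD.isHermitian.apply j i
  rw [← sub_nonneg]
  -- Turning the row `(D i j, D i k)` by a right angle replaces the block on `{j, k}` by its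
  -- adjugate, the matrix that governs Fischer's inequality.
  calc
    0 ≤ star (D i k) * D j j * D i k + star (D i k) * D j k * (-D i j)
          + star (-D i j) * D k j * D i k + star (-D i j) * D k k * (-D i j) :=
      posSemidef_quadForm_pair_nonneg hD j k (D i k) (-D i j)
    _ = D j j * (D i k * D k i) + D k k * (D i j * D j i)
          - (D i j * D j k * D k i + D i k * D k j * D j i) := by
      rw [star_neg, hik, hij]
      ring

/-- For a 3×3 real symmetric positive semidefinite matrix `D`,
`2 D₁₂ D₁₃ D₂₃ ≤ D₂₂ D₁₃² + D₃₃ D₁₂²`. -/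
theorem stmt6 (D : Matrix (Fin 3) (Fin 3) ℝ) (hD : D.PosSemidef) :
    2 * D 0 1 * D 0 2 * D 1 2 ≤ D 1 1 * (D 0 2) ^ 2 + D 2 2 * (D 0 1) ^ 2 := by
  have hsymm (i j : Fin 3) : D j i = D i j := hD.isHermitian.apply i j
  linarith only [hsymm 0 1 ▸ hsymm 0 2 ▸ hsymm 1 2 ▸ stmt6_general hD 0 1 2]
end

section
/- Fix integers N, K, U ≥ 1, nonzero vectors h_1,…,h_U ∈ ℂ^N and v_1,…,v_K ∈ ℂ^N, reals Γ_u > 0 for each u, σ² > 0, and P_T > 0. Call a tuple (W_1,…,W_U, R_d) of N×N positive semidefinite Hermitian matrices feasible if, writing R_X = Σ_{u=1}^U W_u + R_d: (a) h_u^H W_u h_u / Γ_u − Σ_{k≠u} h_u^H W_k h_u − h_u^H R_d h_u − σ² ≥ 0 for every u; and (b) Σ_{u=1}^U tr(W_u) + tr(R_d) ≤ P_T. Define the objective μ(W_1,…,W_U,R_d) = min_{k=1,…,K} conj(v_k)^H R_X conj(v_k), where conj(v_k) denotes the entrywise complex conjugate of v_k. Suppose (W_1,…,W_U,R_d) is feasible,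 has strictly positive objective value, and is globally optimal, i.e., no feasible tuple attains a strictly larger objective. Let P be the matrix of the orthogonal projection of ℂ^N onto span{h_1,…,h_U, conj(v_1),…,conj(v_K)}. Then W_u = P W_u P for every u and R_d = P R_d P; in particular rank(W_u) ≤ K + U and rank(R_d) ≤ K + U. -/
open Matrix
open scoped ComplexOrder

noncomputable section

/-- Feasibility for the SINR-constrained min-illumination-power maximization SDR:
all matrices PSD, SINR constraints (a) and the sum-power constraint (b). -/
def Feasible {N U : ℕ} (h : Fin U → Fin N → ℂ) (Γ : Fin U → ℝ) (σ2 PT : ℝ)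
    (W : Fin U → Matrix (Fin N) (Fin N) ℂ) (Rd : Matrix (Fin N) (Fin N) ℂ) : Prop :=
  (∀ u, (W u).PosSemidef) ∧ Rd.PosSemidef ∧
  (∀ u, (star (h u) ⬝ᵥ ((W u) *ᵥ (h u))).re / Γ u
      - (∑ k ∈ Finset.univ.erase u, (star (h u) ⬝ᵥ ((W k) *ᵥ (h u))).re)
      - (star (h u) ⬝ᵥ (Rd *ᵥ (h u))).re - σ2 ≥ 0) ∧
  (∑ u, (W u).trace.re) + Rd.trace.re ≤ PT

/-- The objective: the minimum over targets of the illumination power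
`conj(v_k)ᴴ R_X conj(v_k)` with `R_X = ∑ u W_u + R_d`. -/
def Objective {N K U : ℕ} (v : Fin K → Fin N → ℂ)
    (W : Fin U → Matrix (Fin N) (Fin N) ℂ) (Rd : Matrix (Fin N) (Fin N) ℂ) : ℝ :=
  ⨅ k : Fin K,
    (star (star (v k)) ⬝ᵥ (((∑ u, W u) + Rd) *ᵥ (star (v k)))).re

/-!
Compressing every matrix `A` of a feasible tuple to `P A P` changes none of the quadratic forms in
the problem, because the projection `P` fixes `h_u` and `conj(v_k)`, and it does not increase the
power. So the compression of an optimal tuple is again optimal. An optimal tuple with positive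
objective spends the whole power budget, since otherwise scaling it up would keep it feasible (a
factor `t ≥ 1` does not hurt the SINR constraints, the noise power being nonnegative) and improve
the objective. Hence no power is lost in the compression: `tr (P A P) = tr A` for each `A`, that is
`tr ((1 - P) A (1 - P)) = 0`, which for positive semidefinite `A` forces `A = P A P`.
-/

section QuadraticForm

variable {m n R : Type*} [Fintype m] [Fintype n] [NonUnitalSemiring R] [StarRing R]

lemma star_dotProduct_conjTranspose_mul_mul_mulVec (A : Matrix m m R) (B : Matrix m n R)
    (x : n → R) :
    star x ⬝ᵥ ((Bᴴ * A * B) *ᵥ x) = star (B *ᵥ x) ⬝ᵥ (A *ᵥ (B *ᵥ x)) := by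
  rw [← mulVec_mulVec, ← mulVec_mulVec, dotProduct_mulVec, star_mulVec]

lemma star_dotProduct_compression_mulVec {P : Matrix n n R} (hP : P.IsHermitian)
    (A : Matrix n n R) {x : n → R} (hx : P *ᵥ x = x) :
    star x ⬝ᵥ ((P * A * P) *ᵥ x) = star x ⬝ᵥ (A *ᵥ x) := by
  simpa only [hP.eq, hx] using star_dotProduct_conjTranspose_mul_mul_mulVec A P x

end QuadraticForm

lemma trace_compression_add_trace_compression_one_sub {n R : Type*} [Fintype n] [DecidableEq n]
    [CommRing R] {P : Matrix n n R} (hP : IsIdempotentElem P) (A : Matrix n n R) :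
    (P * A * P).trace + ((1 - P) * A * (1 - P)).trace = A.trace := by
  rw [trace_mul_cycle, hP.eq, trace_mul_cycle (1 - P), hP.one_sub.eq, ← trace_add, ← add_mul,
    add_sub_cancel, one_mul]

lemma rank_le_card_of_mulVec_mem_span_range {m n ι K : Type*} [Finite m] [Fintype n] [Fintype ι]
    [Field K] {A : Matrix m n K} {b : ι → m → K}
    (hA : ∀ x, A *ᵥ x ∈ Submodule.span K (Set.range b)) : A.rank ≤ Fintype.card ι :=
  (Submodule.finrank_mono (LinearMap.range_le_iff_comap.2 (Submodule.eq_top_iff'.2 hA))).trans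
    (finrank_range_le_card b)

section PosSemidef

variable {n 𝕜 : Type*} [Fintype n] [RCLike 𝕜] {A P : Matrix n n 𝕜}

lemma posSemidef_compression (hP : P.IsHermitian) (hA : A.PosSemidef) :
    (P * A * P).PosSemidef := by
  simpa only [hP.eq] using hA.conjTranspose_mul_mul_same P

lemma mul_eq_zero_of_conjTranspose_mul_mul_eq_zero {m : Type*} [Finite m] (hA : A.PosSemidef)
    {B : Matrix n m 𝕜} (hB : Bᴴ * A * B = 0) : A * B = 0 := by
  classical
  cases nonempty_fintype m
  refine Matrix.ext_of_mulVec_single fun i => ?_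
  rw [zero_mulVec, ← mulVec_mulVec, ← hA.dotProduct_mulVec_zero_iff,
    ← star_dotProduct_conjTranspose_mul_mul_mulVec, hB, zero_mulVec, dotProduct_zero]

lemma re_trace_compression_le (hP : IsStarProjection P) (hA : A.PosSemidef) :
    RCLike.re (P * A * P).trace ≤ RCLike.re A.trace := by
  classical
  have hcompl : 0 ≤ RCLike.re ((1 - P) * A * (1 - P)).trace :=
    (RCLike.nonneg_iff.1 (posSemidef_compression hP.one_sub.isSelfAdjoint hA).trace_nonneg).1
  rw [← trace_compression_add_trace_compression_one_sub hP.isIdempotentElem A, map_add]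
  exact le_add_of_nonneg_right hcompl

lemma compression_eq_self_of_re_trace_eq (hP : IsStarProjection P) (hA : A.PosSemidef)
    (htr : RCLike.re (P * A * P).trace = RCLike.re A.trace) : P * A * P = A := by
  classical
  have hQ : (1 - P)ᴴ = 1 - P := hP.one_sub.isSelfAdjoint
  have hpsd := posSemidef_compression hQ hA
  have htrace : ((1 - P) * A * (1 - P)).trace = 0 := by
    refine RCLike.ext ?_ ?_
    · rw [← trace_compression_add_trace_compression_one_sub hP.isIdempotentElem A, map_add] at htr
      simpa only [map_zero, left_eq_add] using htr
    · simpa only [map_zero] using (RCLike.nonneg_iff.1 hpsd.trace_nonneg).2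
  have hAP : A * P = A := by
    have hAQ : A * (1 - P) = 0 :=
      mul_eq_zero_of_conjTranspose_mul_mul_eq_zero hA (by rw [hQ, hpsd.trace_eq_zero_iff.1 htrace])
    rwa [mul_sub, mul_one, sub_eq_zero, eq_comm] at hAQ
  have hPA : P * A = A := by
    simpa only [conjTranspose_mul, hA.isHermitian.eq, hP.isSelfAdjoint.isHermitian.eq]
      using congrArg conjTranspose hAP
  rw [hPA, hAP]

end PosSemidef

/-- The total transmit power `tr R_X` of a tuple, bounded by `P_T` in constraint (b). -/
def totalPower {ι n : Type*} [Fintype ι] [Fintype n] (W : ι → Matrix n n ℂ)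
    (Rd : Matrix n n ℂ) : ℝ :=
  (∑ u, (W u).trace.re) + Rd.trace.re

lemma totalPower_smul {ι n : Type*} [Fintype ι] [Fintype n] (t : ℝ) (W : ι → Matrix n n ℂ)
    (Rd : Matrix n n ℂ) : totalPower (t • W) (t • Rd) = t * totalPower W Rd := by
  simp only [totalPower, Pi.smul_apply, trace_smul, Complex.smul_re, smul_eq_mul, Finset.mul_sum,
    mul_add]

lemma compression_eq_self_of_totalPower_eq {ι n : Type*} [Fintype ι] [Fintype n]
    {W : ι → Matrix n n ℂ} {Rd P : Matrix n n ℂ} (hP : IsStarProjection P)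
    (hW : ∀ u, (W u).PosSemidef) (hRd : Rd.PosSemidef)
    (hpow : totalPower (fun u => P * W u * P) (P * Rd * P) = totalPower W Rd) :
    (∀ u, P * W u * P = W u) ∧ P * Rd * P = Rd := by
  have hW_le : ∀ u ∈ Finset.univ, (P * W u * P).trace.re ≤ (W u).trace.re :=
    fun u _ => re_trace_compression_le hP (hW u)
  obtain ⟨hWtr, hRdtr⟩ :=
    (add_eq_add_iff_eq_and_eq (Finset.sum_le_sum hW_le) (re_trace_compression_le hP hRd)).1 hpow
  exact ⟨fun u => compression_eq_self_of_re_trace_eq hP (hW u)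
      ((Finset.sum_eq_sum_iff_of_le hW_le).1 hWtr u (Finset.mem_univ u)),
    compression_eq_self_of_re_trace_eq hP hRd hRdtr⟩

/-- Globally optimal solutions of the SDR: feasible tuples whose objective value is not exceeded
by that of any feasible tuple. -/
structure IsOptimal {N K U : ℕ} (h : Fin U → Fin N → ℂ) (v : Fin K → Fin N → ℂ) (Γ : Fin U → ℝ)
    (σ2 PT : ℝ) (W : Fin U → Matrix (Fin N) (Fin N) ℂ) (Rd : Matrix (Fin N) (Fin N) ℂ) :
    Prop where
  feasible : Feasible h Γ σ2 PT W Rd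
  objective_le : ∀ (W' : Fin U → Matrix (Fin N) (Fin N) ℂ) (Rd' : Matrix (Fin N) (Fin N) ℂ),
    Feasible h Γ σ2 PT W' Rd' → Objective v W' Rd' ≤ Objective v W Rd

section Beamforming

variable {N K U : ℕ} {h : Fin U → Fin N → ℂ} {v : Fin K → Fin N → ℂ} {Γ : Fin U → ℝ}
  {σ2 PT : ℝ} {W : Fin U → Matrix (Fin N) (Fin N) ℂ} {Rd P : Matrix (Fin N) (Fin N) ℂ}

lemma objective_smul {t : ℝ} (ht : 0 ≤ t) :
    Objective v (t • W) (t • Rd) = t * Objective v W Rd := by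
  simp only [Objective, Pi.smul_apply, ← Finset.smul_sum, ← smul_add, smul_mulVec, dotProduct_smul,
    Complex.smul_re, smul_eq_mul, Real.mul_iInf_of_nonneg ht]

lemma objective_compression (hP : P.IsHermitian) (hPv : ∀ k, P *ᵥ star (v k) = star (v k)) :
    Objective v (fun u => P * W u * P) (P * Rd * P) = Objective v W Rd := by
  simp only [Objective, ← Finset.sum_mul, ← Finset.mul_sum, ← add_mul, ← mul_add,
    star_dotProduct_compression_mulVec hP _ (hPv _)]

lemma Feasible.totalPower_le (hfeas : Feasible h Γ σ2 PT W Rd) : totalPower W Rd ≤ PT :=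
  hfeas.2.2.2

lemma Feasible.smul (hfeas : Feasible h Γ σ2 PT W Rd) (hσ : 0 ≤ σ2) {t : ℝ} (ht : 1 ≤ t)
    (hpow : t * totalPower W Rd ≤ PT) : Feasible h Γ σ2 PT (t • W) (t • Rd) := by
  obtain ⟨hW, hRd, hsinr, -⟩ := hfeas
  have ht0 : 0 ≤ t := zero_le_one.trans ht
  refine ⟨fun u => (hW u).smul ht0, hRd.smul ht0, fun u => ?_,
    (totalPower_smul t W Rd).trans_le hpow⟩
  simp only [Pi.smul_apply, smul_mulVec, dotProduct_smul, Complex.smul_re, smul_eq_mul,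
    ← Finset.mul_sum, mul_div_assoc]
  linarith [mul_nonneg ht0 (hsinr u), le_mul_of_one_le_left hσ ht]

lemma Feasible.compression (hfeas : Feasible h Γ σ2 PT W Rd) (hP : IsStarProjection P)
    (hPh : ∀ u, P *ᵥ h u = h u) :
    Feasible h Γ σ2 PT (fun u => P * W u * P) (P * Rd * P) := by
  obtain ⟨hW, hRd, hsinr, hpow⟩ := hfeas
  have hPH : P.IsHermitian := hP.isSelfAdjoint
  refine ⟨fun u => posSemidef_compression hPH (hW u), posSemidef_compression hPH hRd,
    fun u => ?_, ?_⟩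
  · simpa only [star_dotProduct_compression_mulVec hPH _ (hPh u)] using hsinr u
  · exact (add_le_add (Finset.sum_le_sum fun u _ => re_trace_compression_le hP (hW u))
      (re_trace_compression_le hP hRd)).trans hpow

lemma IsOptimal.compression (hopt : IsOptimal h v Γ σ2 PT W Rd) (hP : IsStarProjection P)
    (hPh : ∀ u, P *ᵥ h u = h u) (hPv : ∀ k, P *ᵥ star (v k) = star (v k)) :
    IsOptimal h v Γ σ2 PT (fun u => P * W u * P) (P * Rd * P) where
  feasible := hopt.feasible.compression hP hPh
  objective_le W' Rd' hfeas' :=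
    (hopt.objective_le W' Rd' hfeas').trans_eq (objective_compression hP.isSelfAdjoint hPv).symm

lemma IsOptimal.totalPower_eq (hopt : IsOptimal h v Γ σ2 PT W Rd) (hpos : 0 < Objective v W Rd)
    (hσ : 0 ≤ σ2) (hPT : 0 < PT) : totalPower W Rd = PT := by
  refine hopt.feasible.totalPower_le.antisymm (le_of_not_gt fun hlt => ?_)
  obtain ⟨t, ht, hpow⟩ : ∃ t : ℝ, 1 < t ∧ t * totalPower W Rd ≤ PT := by
    have hgap : (2 - totalPower W Rd / PT) * totalPower W Rd
        = PT - (PT - totalPower W Rd) ^ 2 / PT := by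
      field_simp
      ring
    refine ⟨2 - totalPower W Rd / PT, ?_, hgap.trans_le (sub_le_self _ (by positivity))⟩
    linarith [(div_lt_one hPT).2 hlt]
  have hle := hopt.objective_le _ _ (hopt.feasible.smul hσ ht.le hpow)
  rw [objective_smul (by linarith)] at hle
  exact hle.not_gt (lt_mul_of_one_lt_left hpos ht)

theorem IsOptimal.compression_eq_self (hopt : IsOptimal h v Γ σ2 PT W Rd)
    (hpos : 0 < Objective v W Rd) (hσ : 0 ≤ σ2) (hPT : 0 < PT) (hP : IsStarProjection P)
    (hPh : ∀ u, P *ᵥ h u = h u) (hPv : ∀ k, P *ᵥ star (v k) = star (v k)) :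
    (∀ u, P * W u * P = W u) ∧ P * Rd * P = Rd := by
  have hpos' : 0 < Objective v (fun u => P * W u * P) (P * Rd * P) :=
    hpos.trans_eq (objective_compression hP.isSelfAdjoint hPv).symm
  have hpow := (hopt.compression hP hPh hPv).totalPower_eq hpos' hσ hPT
  exact compression_eq_self_of_totalPower_eq hP hopt.feasible.1 hopt.feasible.2.1
    (hpow.trans (hopt.totalPower_eq hpos hσ hPT).symm)

end Beamforming

/-- Proposition 4: every globally optimal solution of the SDR of the SINR-constrained
minimum-target-illumination-power maximization problem is supported on the subspace
spanned by the communication channels and the conjugated steering vectors. -/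
theorem stmt8 {N K U : ℕ} (hK : 1 ≤ K) (hU : 1 ≤ U) (hN : 1 ≤ N)
    (h : Fin U → Fin N → ℂ) (v : Fin K → Fin N → ℂ)
    (hh : ∀ u, h u ≠ 0) (hv : ∀ k, v k ≠ 0)
    (Γ : Fin U → ℝ) (hΓ : ∀ u, 0 < Γ u) (σ2 PT : ℝ) (hσ : 0 < σ2) (hPT : 0 < PT)
    (W : Fin U → Matrix (Fin N) (Fin N) ℂ) (Rd : Matrix (Fin N) (Fin N) ℂ)
    (hfeas : Feasible h Γ σ2 PT W Rd)
    (hpos : 0 < Objective v W Rd)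
    (hopt : ∀ (W' : Fin U → Matrix (Fin N) (Fin N) ℂ)
        (Rd' : Matrix (Fin N) (Fin N) ℂ),
        Feasible h Γ σ2 PT W' Rd' → Objective v W' Rd' ≤ Objective v W Rd)
    (P : Matrix (Fin N) (Fin N) ℂ)
    (hP1 : Pᴴ = P) (hP2 : P * P = P)
    (hPrange : ∀ x : Fin N → ℂ,
      P *ᵥ x ∈ Submodule.span ℂ (Set.range h ∪ Set.range (fun k => star (v k))))
    (hPfix : ∀ x ∈ Submodule.span ℂ (Set.range h ∪ Set.range (fun k => star (v k))),
      P *ᵥ x = x) :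
    (∀ u, W u = P * (W u) * P) ∧ Rd = P * Rd * P ∧
    (∀ u, (W u).rank ≤ K + U) ∧ Rd.rank ≤ K + U := by
  have hP : IsStarProjection P := ⟨hP2, hP1⟩
  have hPh : ∀ u, P *ᵥ h u = h u := fun u => hPfix _ (Submodule.subset_span (.inl ⟨u, rfl⟩))
  have hPv : ∀ k, P *ᵥ star (v k) = star (v k) :=
    fun k => hPfix _ (Submodule.subset_span (.inr ⟨k, rfl⟩))
  have hopt' : IsOptimal h v Γ σ2 PT W Rd := ⟨hfeas, hopt⟩
  obtain ⟨hW, hRd⟩ := hopt'.compression_eq_self hpos hσ.le hPT hP hPh hPv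
  have hrankP : P.rank ≤ K + U := by
    rw [← Set.Sum.elim_range] at hPrange
    simpa [add_comm] using rank_le_card_of_mulVec_mem_span_range hPrange
  have hrank : ∀ A : Matrix (Fin N) (Fin N) ℂ, P * A * P = A → A.rank ≤ K + U :=
    fun A hA => hA ▸ (rank_mul_le_right (P * A) P).trans hrankP
  exact ⟨fun u => (hW u).symm, hRd.symm, fun u => hrank _ (hW u), hrank _ hRd⟩

end
end

section
/- Consider N transmit antennas at positions p_n = (x_n, y_n, z_n) ∈ ℝ³, none coinciding with the target location t = (0, t_y, t_z), whose first coordinate is zero. Suppose there is an involution σ of {1,…,N} (σ∘σ = id) with p_{σ(n)} = (−x_n, y_n, z_n) for all n, i.e., the array is mirror-symmetric in the x-coordinate. Let r_n = ‖p_n − t‖ > 0, and for real constants λ > 0 and ν define the near-field steering vector v ∈ ℂ^N by v_n = (λ/(4π r_n)) e^{−i ν r_n} and its derivative with respect to the target x-coordinate v̇ₓ ∈ ℂ^N by (v̇ₓ)_n = v_n (x_n/r_n² + i ν x_n/r_n). Then v^H v̇ₓ = Σ_{n=1}^N conj(v_n) (v̇ₓ)_n = 0. -/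
/-!
Mirroring preserves the distance to the target, hence every entry `v n`, and flips the sign of the
`x`-coordinate, hence of the logarithmic derivative `vdx n / v n`. So the summand
`|v n|² (vdx n / v n)` is odd under the mirror permutation, and its sum equals its own negative.
-/

theorem sum_eq_zero_of_comp_perm_eq_neg {ι M : Type*} [Fintype ι] [AddCommGroup M]
    [IsAddTorsionFree M] {f : ι → M} (σ : Equiv.Perm ι) (hf : ∀ n, f (σ n) = -f n) :
    ∑ n, f n = 0 := by
  refine self_eq_neg.mp ?_
  calc ∑ n, f n = ∑ n, f (σ n) := (Equiv.sum_comp σ f).symm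
    _ = -∑ n, f n := by simp only [hf, Finset.sum_neg_distrib]

theorem sum_star_mul_mul_eq_zero_of_comp_perm {ι R : Type*} [Fintype ι] [NonUnitalNonAssocRing R]
    [IsAddTorsionFree R] [Star R] {v d : ι → R} (σ : Equiv.Perm ι)
    (hv : ∀ n, v (σ n) = v n) (hd : ∀ n, d (σ n) = -d n) :
    ∑ n, star (v n) * (v n * d n) = 0 :=
  sum_eq_zero_of_comp_perm_eq_neg σ fun n => by rw [hv, hd, mul_neg, mul_neg]

theorem stmt13_general {ι : Type*} [Fintype ι] (x r : ι → ℝ) (σ : Equiv.Perm ι)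
    (hx : ∀ n, x (σ n) = -x n) (hr : ∀ n, r (σ n) = r n) (a g : ℝ → ℂ) (v vdx : ι → ℂ)
    (hv : ∀ n, v n = a (r n)) (hvdx : ∀ n, vdx n = v n * (x n * g (r n))) :
    ∑ n, star (v n) * vdx n = 0 := by
  have v_even : ∀ n, v (σ n) = v n := fun n => by rw [hv, hv, hr]
  have logDeriv_odd : ∀ n, (x (σ n) * g (r (σ n)) : ℂ) = -(x n * g (r n)) := fun n => by
    rw [hx, hr, Complex.ofReal_neg, neg_mul]
  simpa only [hvdx] using sum_star_mul_mul_eq_zero_of_comp_perm σ v_even logDeriv_odd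

/-- Orthogonality `vᴴ v̇ₓ = 0` (eq. (54)) for a near-field steering vector of an
array that is mirror-symmetric in the x-coordinate, with the target on the
symmetry plane `x = 0`. -/
theorem stmt13 {N : ℕ} (x y z : Fin N → ℝ) (ty tz lam ν : ℝ) (hlam : 0 < lam)
    (r : Fin N → ℝ)
    (hr : ∀ n, r n = Real.sqrt (x n ^ 2 + (y n - ty) ^ 2 + (z n - tz) ^ 2))
    (hrpos : ∀ n, 0 < r n)
    (σ : Equiv.Perm (Fin N)) (hσ : ∀ n, σ (σ n) = n)
    (hx : ∀ n, x (σ n) = - x n) (hy : ∀ n, y (σ n) = y n)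
    (hz : ∀ n, z (σ n) = z n)
    (v vdx : Fin N → ℂ)
    (hv : ∀ n, v n = ((lam / (4 * Real.pi * r n) : ℝ) : ℂ)
        * Complex.exp (-Complex.I * ((ν * r n : ℝ) : ℂ)))
    (hvdx : ∀ n, vdx n = v n * (((x n / (r n) ^ 2 : ℝ) : ℂ)
        + Complex.I * ((ν * x n / r n : ℝ) : ℂ))) :
    ∑ n, star (v n) * vdx n = 0 := by
  have hrσ : ∀ n, r (σ n) = r n := fun n => by rw [hr, hr, hx, hy, hz, neg_sq]
  exact stmt13_general x r σ hx hrσ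
    (fun ρ => ((lam / (4 * Real.pi * ρ) : ℝ) : ℂ) * Complex.exp (-Complex.I * ((ν * ρ : ℝ) : ℂ)))
    (fun ρ => 1 / ρ ^ 2 + Complex.I * (ν / ρ)) v vdx hv fun n => by rw [hvdx]; push_cast; ring
end

section
/- Consider N transmit antennas at positions p_n = (x_n, y_n, z_n) ∈ ℝ³, none coinciding with the target location t = (0, t_y, t_z), whose first coordinate is zero. Suppose there is an involution σ of {1,…,N} (σ∘σ = id) with p_{σ(n)} = (−x_n, y_n, z_n) for all n. Let r_n = ‖p_n − t‖ > 0, and for real constants λ > 0 and ν define v_n = (λ/(4π r_n)) e^{−i ν r_n}, (v̇ₓ)_n = v_n (x_n/r_n² + i ν x_n/r_n), and (v̇_y)_n = v_n ((y_n − t_y)/r_n² + i ν (y_n − t_y)/r_n). Then v̇ₓ^H v̇_y = Σ_{n=1}^N conj((v̇ₓ)_n) (v̇_y)_n = 0. -/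
/-! Each derivative is a weight depending only on the range `r n` times a coordinate offset, and
the mirror symmetry preserves the ranges and the `y`-offsets while negating the `x`-offsets.
Reindexing the sum by `σ` thus shows that it equals its own negative. -/

lemma dotProduct_eq_zero_of_comp_perm {ι R : Type*} [Fintype ι] [NonUnitalNonAssocRing R]
    [IsAddTorsionFree R] (σ : Equiv.Perm ι) {a b : ι → R} (ha : a ∘ σ = -a) (hb : b ∘ σ = b) :
    a ⬝ᵥ b = 0 := by
  refine self_eq_neg.mp ?_
  calc a ⬝ᵥ b = (a ∘ σ) ⬝ᵥ (b ∘ σ) := (comp_equiv_dotProduct_comp_equiv a b σ).symm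
    _ = -(a ⬝ᵥ b) := by rw [ha, hb, neg_dotProduct]

theorem stmt14_general {ι : Type*} [Fintype ι] (σ : Equiv.Perm ι) (r x y : ι → ℝ)
    (hr : ∀ n, r (σ n) = r n) (hx : ∀ n, x (σ n) = -x n) (hy : ∀ n, y (σ n) = y n)
    (f g : ℝ → ℂ) :
    ∑ n, star (f (r n) * x n) * (g (r n) * y n) = 0 := by
  let a : ι → ℂ := fun n ↦ star (f (r n) * x n)
  let b : ι → ℂ := fun n ↦ g (r n) * y n
  have ha : a ∘ σ = -a := by
    ext n
    simp only [a, Function.comp_apply, Pi.neg_apply, hr, hx, Complex.ofReal_neg, mul_neg, star_neg]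
  have hb : b ∘ σ = b := by
    ext n
    simp only [b, Function.comp_apply, hr, hy]
  exact dotProduct_eq_zero_of_comp_perm σ ha hb

/-- The free-space response `φ(r)` at range `r`, with wavelength `lam` and wavenumber `ν`: the
entries of the near-field steering vector are `φ(rₙ)`. -/
noncomputable def sphericalWave (lam ν r : ℝ) : ℂ :=
  ((lam / (4 * Real.pi * r) : ℝ) : ℂ) * Complex.exp (-Complex.I * ((ν * r : ℝ) : ℂ))

/-- The radial factor `-(dφ/dr) / r` of the gradient of `φ(‖p - t‖)` with respect to the target `t`,
for `φ` the spherical wave; multiplying it by the `u`-component of `p - t` gives the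
`u`-derivative of a steering-vector entry. -/
noncomputable def gradientWeight (lam ν r : ℝ) : ℂ :=
  sphericalWave lam ν r * (1 / (r : ℂ) ^ 2 + Complex.I * (ν / r))

lemma sphericalWave_mul_eq_gradientWeight_mul (lam ν r u : ℝ) :
    sphericalWave lam ν r * (((u / r ^ 2 : ℝ) : ℂ) + Complex.I * ((ν * u / r : ℝ) : ℂ)) =
      gradientWeight lam ν r * u := by
  rw [gradientWeight]
  push_cast
  ring

/-- Cross-orthogonality `v̇ₓᴴ v̇_y = 0` (eq. (55)) for a near-field steering vector of
an array that is mirror-symmetric in the x-coordinate, with the target on the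
symmetry plane `x = 0`. -/
theorem stmt14 {N : ℕ} (x y z : Fin N → ℝ) (ty tz lam ν : ℝ) (hlam : 0 < lam)
    (r : Fin N → ℝ)
    (hr : ∀ n, r n = Real.sqrt (x n ^ 2 + (y n - ty) ^ 2 + (z n - tz) ^ 2))
    (hrpos : ∀ n, 0 < r n)
    (σ : Equiv.Perm (Fin N)) (hσ : ∀ n, σ (σ n) = n)
    (hx : ∀ n, x (σ n) = - x n) (hy : ∀ n, y (σ n) = y n)
    (hz : ∀ n, z (σ n) = z n)
    (v vdx vdy : Fin N → ℂ)
    (hv : ∀ n, v n = ((lam / (4 * Real.pi * r n) : ℝ) : ℂ)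
        * Complex.exp (-Complex.I * ((ν * r n : ℝ) : ℂ)))
    (hvdx : ∀ n, vdx n = v n * (((x n / (r n) ^ 2 : ℝ) : ℂ)
        + Complex.I * ((ν * x n / r n : ℝ) : ℂ)))
    (hvdy : ∀ n, vdy n = v n * ((((y n - ty) / (r n) ^ 2 : ℝ) : ℂ)
        + Complex.I * ((ν * (y n - ty) / r n : ℝ) : ℂ))) :
    ∑ n, star (vdx n) * vdy n = 0 := by
  have hrσ (n) : r (σ n) = r n := by rw [hr, hr, hx, hy, hz, neg_sq]
  have hwave : ∀ n, v n = sphericalWave lam ν (r n) := hv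
  simpa only [hvdx, hvdy, hwave, sphericalWave_mul_eq_gradientWeight_mul] using
    stmt14_general σ r x (y · - ty) hrσ hx (fun n ↦ by rw [hy])
      (gradientWeight lam ν) (gradientWeight lam ν)
end
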